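/- Let C be a quasicategory. The restriction map Fun(Δ[2], C) → Fun(Λ[2,1], C) induced by the inner horn inclusion Λ[2,1] ⊆ Δ[2] is a trivial Kan fibration. In particular, for any pair of edges f: x → y and g: y → z of C, the fiber over the point of Fun(Λ[2,1], C) determined by (f, g) — the simplicial set of compositions of f and g — is a contractible Kan complex. -/

import Mathlib

open CategoryTheory Simplicial Opposite MonoidalCategory

namespace SSetPaper

/-- A map of simplicial sets is a trivial Kan fibration if every commutative square
whose left edge is a boundary inclusion `∂Δ[n] ⊆ Δ[n]` admits a diagonal lift. -/
def IsTrivialKanFibration {X Y : SSet.{0}} (p : X ⟶ Y) : Prop :=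
  ∀ (n : ℕ) (t : (∂Δ[n] : SSet) ⟶ X) (b : (Δ[n] : SSet) ⟶ Y),
    t ≫ p = ∂Δ[n].ι ≫ b →
    ∃ l : (Δ[n] : SSet) ⟶ X, ∂Δ[n].ι ≫ l = t ∧ l ≫ p = b

/-- A simplicial set is contractible if every map `∂Δ[n] ⟶ S` extends to `Δ[n] ⟶ S`
(equivalently, the map `S ⟶ Δ[0]` is a trivial Kan fibration). -/
def IsContractible (S : SSet.{0}) : Prop :=
  ∀ (n : ℕ) (t : (∂Δ[n] : SSet) ⟶ S), ∃ l : (Δ[n] : SSet) ⟶ S, ∂Δ[n].ι ≫ l = t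

/-- A simplicial set `S` is a *Kan complex* if it satisfies the following horn-filling condition:
for every `n : ℕ` and `0 ≤ i ≤ n`,
every map of simplicial sets `σ₀ : Λ[n, i] → S` can be extended to a map `σ : Δ[n] → S`.
(This is `SSet.KanComplex` of the older Mathlib, where `n = 0` is included.) -/
class KanComplex (S : SSet.{0}) : Prop where
  hornFilling : ∀ ⦃n : ℕ⦄ ⦃i : Fin (n + 1)⦄ (σ₀ : (Λ[n, i] : SSet) ⟶ S),
    ∃ σ : (Δ[n] : SSet) ⟶ S, σ₀ = Λ[n, i].ι ≫ σ

/-- The internal hom `Fun(A, X)` of simplicial sets: its `n`-simplices are the maps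
`Δ[n] × A ⟶ X`. -/
noncomputable def FunSSet (A X : SSet.{0}) : SSet.{0} where
  obj a := MonoidalCategory.tensorObj (SSet.stdSimplex.obj a.unop) A ⟶ X
  map {a b} f := ↾fun g => (SSet.stdSimplex.map f.unop ▷ A) ≫ g
  map_id a := by
    refine ConcreteCategory.hom_ext _ _ fun g => ?_
    show (SSet.stdSimplex.map (𝟙 a).unop ▷ A) ≫ g = g
    rw [unop_id, show SSet.stdSimplex.{0}.map (𝟙 a.unop) = 𝟙 (SSet.stdSimplex.obj a.unop) from
        CategoryTheory.Functor.map_id _ _, MonoidalCategory.id_whiskerRight,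
      Category.id_comp]
  map_comp {a b c} f g := by
    refine ConcreteCategory.hom_ext _ _ fun s => ?_
    show (SSet.stdSimplex.map (f ≫ g).unop ▷ A) ≫ s
        = (SSet.stdSimplex.map g.unop ▷ A) ≫ (SSet.stdSimplex.map f.unop ▷ A) ≫ s
    rw [unop_comp, show SSet.stdSimplex.{0}.map (g.unop ≫ f.unop)
        = SSet.stdSimplex.map g.unop ≫ SSet.stdSimplex.map f.unop from Functor.map_comp _ _ _,
      MonoidalCategory.comp_whiskerRight, Category.assoc]

/-- The restriction map `Fun(Δ[2], C) ⟶ Fun(Λ[2,1], C)` induced by the inner horn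
inclusion `Λ[2,1] ⊆ Δ[2]`. -/
noncomputable def funRestrict (C : SSet.{0}) :
    FunSSet (Δ[2] : SSet) C ⟶ FunSSet (Λ[2, 1] : SSet) C where
  app a := ↾fun g => (SSet.stdSimplex.obj a.unop ◁ Λ[2, 1].ι) ≫ g
  naturality a b f := by
    refine ConcreteCategory.hom_ext _ _ fun (g : SSet.stdSimplex.obj a.unop ⊗ (Δ[2] : SSet) ⟶ C) => ?_
    show (SSet.stdSimplex.obj b.unop ◁ Λ[2, 1].ι) ≫
        (SSet.stdSimplex.map f.unop ▷ (Δ[2] : SSet)) ≫ g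
      = (SSet.stdSimplex.map f.unop ▷ (Λ[2, 1] : SSet)) ≫
        (SSet.stdSimplex.obj a.unop ◁ Λ[2, 1].ι) ≫ g
    rw [← Category.assoc, whisker_exchange, Category.assoc]

/-- The fiber of the restriction map `Fun(Δ[2], C) ⟶ Fun(Λ[2,1], C)` over the point
determined by `u : Λ[2,1] ⟶ C`: the simplicial set of compositions. -/
noncomputable def CompositionSpace (C : SSet.{0}) (u : (Λ[2, 1] : SSet) ⟶ C) : SSet.{0} where
  obj a := { g : MonoidalCategory.tensorObj (SSet.stdSimplex.obj a.unop) (Δ[2] : SSet) ⟶ C //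
      (SSet.stdSimplex.obj a.unop ◁ Λ[2, 1].ι) ≫ g
        = CartesianMonoidalCategory.snd _ _ ≫ u }
  map {a b} f := ↾fun g => ⟨(SSet.stdSimplex.map f.unop ▷ (Δ[2] : SSet)) ≫ g.1, by
    rw [← Category.assoc, whisker_exchange, Category.assoc, g.2, ← Category.assoc,
      CartesianMonoidalCategory.whiskerRight_snd]⟩
  map_id a := by
    refine ConcreteCategory.hom_ext _ _ fun g => ?_
    apply Subtype.ext
    show (SSet.stdSimplex.map (𝟙 a).unop ▷ (Δ[2] : SSet)) ≫ g.1 = g.1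
    rw [unop_id, show SSet.stdSimplex.{0}.map (𝟙 a.unop) = 𝟙 (SSet.stdSimplex.obj a.unop) from
        CategoryTheory.Functor.map_id _ _, MonoidalCategory.id_whiskerRight,
      Category.id_comp]
  map_comp {a b c} f g := by
    refine ConcreteCategory.hom_ext _ _ fun s => ?_
    apply Subtype.ext
    show (SSet.stdSimplex.map (f ≫ g).unop ▷ (Δ[2] : SSet)) ≫ s.1
        = (SSet.stdSimplex.map g.unop ▷ (Δ[2] : SSet)) ≫
            (SSet.stdSimplex.map f.unop ▷ (Δ[2] : SSet)) ≫ s.1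
    rw [unop_comp, show SSet.stdSimplex.{0}.map (g.unop ≫ f.unop)
        = SSet.stdSimplex.map g.unop ≫ SSet.stdSimplex.map f.unop from Functor.map_comp _ _ _,
      MonoidalCategory.comp_whiskerRight, Category.assoc]

/-- The edge `0 → 1` of the inner horn `Λ[2,1]`. -/
def e01 : (Λ[2, 1] : SSet) _⦋1⦌ := SSet.horn.edge 2 1 0 1 (by decide) (by decide)

/-- The edge `1 → 2` of the inner horn `Λ[2,1]`. -/
def e12 : (Λ[2, 1] : SSet) _⦋1⦌ := SSet.horn.edge 2 1 1 2 (by decide) (by decide)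

end SSetPaper

/-!
STATEMENT 11: Let `C` be a quasicategory.  The restriction map
`Fun(Δ[2], C) → Fun(Λ[2,1], C)` induced by the inner horn inclusion `Λ[2,1] ⊆ Δ[2]` is a
trivial Kan fibration.  In particular, for any pair of edges `f : x → y` and `g : y → z`
of `C`, the fiber over the point of `Fun(Λ[2,1], C)` determined by `(f, g)` — the
simplicial set of compositions of `f` and `g` — is a contractible Kan complex.
-/

namespace SSetPaper

/-- Transpose of a map into `Fun(A, X)`. -/
noncomputable def uncurryFun {K A X : SSet.{0}} (t : K ⟶ FunSSet A X) : K ⊗ A ⟶ X where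
  app n := ↾fun p =>
    (show SSet.stdSimplex.obj n.unop ⊗ A ⟶ X from t.app n p.1).app n
      (SSet.stdSimplex.objEquiv.symm (𝟙 n.unop), p.2)
  naturality n m f := by
    refine ConcreteCategory.hom_ext _ _ fun p => ?_
    have h : t.app m (K.map f p.1) = (FunSSet A X).map f (t.app n p.1) :=
      NatTrans.naturality_apply t f p.1
    have h2 := NatTrans.naturality_apply
      (show SSet.stdSimplex.obj n.unop ⊗ A ⟶ X from t.app n p.1) f
      (show (SSet.stdSimplex.obj n.unop ⊗ A).obj n from
        (SSet.stdSimplex.objEquiv.symm (𝟙 n.unop), p.2))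
    show (show SSet.stdSimplex.obj m.unop ⊗ A ⟶ X from t.app m (K.map f p.1)).app m
      (SSet.stdSimplex.objEquiv.symm (𝟙 m.unop), A.map f p.2) = _
    rw [h]
    refine Eq.trans ?_ h2
    show (show SSet.stdSimplex.obj n.unop ⊗ A ⟶ X from t.app n p.1).app m _ = _
    congr 1

/-- Transpose of a map out of `K ⊗ A`. -/
noncomputable def curryFun {K A X : SSet.{0}} (g : K ⊗ A ⟶ X) : K ⟶ FunSSet A X where
  app n := ↾fun k => (SSet.yonedaEquiv.symm k ▷ A) ≫ g
  naturality n m f := by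
    refine ConcreteCategory.hom_ext _ _ fun k => ?_
    show (SSet.yonedaEquiv.symm (K.map f k) ▷ A) ≫ g =
      (SSet.stdSimplex.map f.unop ▷ A) ≫ (SSet.yonedaEquiv.symm k ▷ A) ≫ g
    rw [← Category.assoc, ← comp_whiskerRight]
    congr 2
    apply SSet.yonedaEquiv.injective
    rw [Equiv.apply_symm_apply]
    rw [← SSet.yonedaEquiv_naturality, Equiv.apply_symm_apply]
    rfl

lemma uncurryFun_comp {K L A X : SSet.{0}} (i : K ⟶ L) (t : L ⟶ FunSSet A X) :
    uncurryFun (i ≫ t) = (i ▷ A) ≫ uncurryFun t := rfl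

lemma uncurryFun_restrict {K C : SSet.{0}} (t : K ⟶ FunSSet (Δ[2] : SSet) C) :
    uncurryFun (t ≫ funRestrict C) = (K ◁ Λ[2, 1].ι) ≫ uncurryFun t := rfl

lemma uncurryFun_curryFun {K A X : SSet.{0}} (g : K ⊗ A ⟶ X) :
    uncurryFun (curryFun g) = g := by
  ext n p
  show g.app n ((SSet.yonedaEquiv.symm p.1).app n (SSet.stdSimplex.objEquiv.symm (𝟙 n.unop)), p.2)
    = g.app n p
  congr 1
  refine Prod.ext ?_ rfl
  exact SSet.yonedaEquiv.apply_symm_apply p.1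

lemma uncurryFun_injective {K A X : SSet.{0}} {s t : K ⟶ FunSSet A X}
    (h : uncurryFun s = uncurryFun t) : s = t := by
  ext n k
  have key : ∀ (r : K ⟶ FunSSet A X), r.app n k = (SSet.yonedaEquiv.symm k ▷ A) ≫ uncurryFun r := by
    intro r
    refine NatTrans.ext (funext fun m => ?_)
    refine ConcreteCategory.hom_ext _ _ fun p => ?_
    have h : r.app m (K.map (SSet.stdSimplex.objEquiv p.1).op k) =
        (FunSSet A X).map (SSet.stdSimplex.objEquiv p.1).op (r.app n k) :=
      NatTrans.naturality_apply r (SSet.stdSimplex.objEquiv p.1).op k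
    show _ = (show SSet.stdSimplex.obj m.unop ⊗ A ⟶ X from
      r.app m (K.map (SSet.stdSimplex.objEquiv p.1).op k)).app m
        (SSet.stdSimplex.objEquiv.symm (𝟙 m.unop), p.2)
    rw [h]
    show (show SSet.stdSimplex.obj n.unop ⊗ A ⟶ X from r.app n k).app m p =
      (show SSet.stdSimplex.obj n.unop ⊗ A ⟶ X from r.app n k).app m _
    congr 1
    refine Prod.ext ?_ rfl
    apply SSet.stdSimplex.objEquiv.injective
    show _ = 𝟙 _ ≫ _
    rw [Category.id_comp]
    rfl
  exact (key s).trans ((congrArg _ h).trans (key t).symm)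

theorem restrict_trivial (C : SSet.{0}) [SSet.Quasicategory C] :
    IsTrivialKanFibration (funRestrict C) := by
  intro n t b h
  have hsq : (∂Δ[n] : SSet) ◁ Λ[2, 1].ι ≫ uncurryFun t =
      (∂Δ[n].ι ▷ (Λ[2, 1] : SSet)) ≫ uncurryFun b := by
    rw [← uncurryFun_restrict, h, uncurryFun_comp]
  have po := SSet.Subcomplex.unionProd.isPushout (SSet.boundary.{0} n) (SSet.horn.{0} 2 1)
  have han : SSet.innerAnodyneExtensions
      ((SSet.boundary.{0} n).unionProd (SSet.horn.{0} 2 1)).ι :=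
    SSet.innerAnodyneExtensions_unionProd_ι _ _
      (SSet.innerAnodyneExtensions.horn_ι (by decide) (by decide))
  have hlp := han (Limits.terminal.from C) (SSet.mem_innerFibrations _)
  let d := po.desc (uncurryFun b) (uncurryFun t) hsq.symm
  have sq : CommSq d ((SSet.boundary.{0} n).unionProd (SSet.horn.{0} 2 1)).ι
      (Limits.terminal.from C) (Limits.terminal.from _) := ⟨Subsingleton.elim _ _⟩
  refine ⟨curryFun sq.lift, ?_, ?_⟩
  · apply uncurryFun_injective
    rw [uncurryFun_comp, uncurryFun_curryFun, ← SSet.Subcomplex.unionProd.ι₂_ι, Category.assoc,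
      sq.fac_left]
    exact po.inr_desc _ _ _
  · apply uncurryFun_injective
    rw [uncurryFun_restrict, uncurryFun_curryFun, ← SSet.Subcomplex.unionProd.ι₁_ι, Category.assoc,
      sq.fac_left]
    exact po.inl_desc _ _ _

/-- The inclusion of the fiber. -/
noncomputable def fiberIncl (C : SSet.{0}) (u : (Λ[2, 1] : SSet) ⟶ C) :
    CompositionSpace C u ⟶ FunSSet (Δ[2] : SSet) C where
  app _ := ↾fun g => g.1
  naturality _ _ _ := rfl

theorem fiber_contractible (C : SSet.{0}) [SSet.Quasicategory C] (u : (Λ[2, 1] : SSet) ⟶ C) :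
    IsContractible (CompositionSpace C u) := by
  intro n t
  let b : (Δ[n] : SSet) ⟶ FunSSet (Λ[2, 1] : SSet) C :=
    curryFun (CartesianMonoidalCategory.snd _ _ ≫ u)
  obtain ⟨l, hl, hb⟩ := restrict_trivial C n (t ≫ fiberIncl C u) b (by
    apply uncurryFun_injective
    rw [uncurryFun_comp _ b, uncurryFun_curryFun]
    refine NatTrans.ext (funext fun m => ?_)
    refine ConcreteCategory.hom_ext _ _ fun p => ?_
    exact congrArg (fun q : _ ⟶ C => q.app m (SSet.stdSimplex.objEquiv.symm (𝟙 m.unop), p.2))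
      (t.app m p.1).2)
  refine ⟨{ app := fun m => ↾fun k => ⟨l.app m k, ?_⟩, naturality := ?_ }, ?_⟩
  · have := congrArg (fun q => q.app m k) hb
    refine Eq.trans this ?_
    show (SSet.yonedaEquiv.symm k ▷ _) ≫ CartesianMonoidalCategory.snd _ _ ≫ u = _
    rw [← Category.assoc, CartesianMonoidalCategory.whiskerRight_snd]
  · intro m m' f
    refine ConcreteCategory.hom_ext _ _ fun p => ?_
    exact Subtype.ext (show l.app m' ((Δ[n] : SSet).map f p) = (FunSSet _ C).map f (l.app m p) from
      NatTrans.naturality_apply l f p)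
  · refine NatTrans.ext (funext fun m => ?_)
    refine ConcreteCategory.hom_ext _ _ fun p => ?_
    exact Subtype.ext (congrArg (fun q => q.app m p) hl)

theorem kan_of_contractible (S : SSet.{0}) (h : IsContractible S) : KanComplex S where
  hornFilling n i σ₀ := by
    have h1 : SSet.modelCategoryQuillen.I.rlp (Limits.terminal.from S) := by
      rintro _ _ _ ⟨m⟩
      refine ⟨fun {f g} sq => ?_⟩
      obtain ⟨l, hl⟩ := h m f
      exact ⟨⟨⟨l, hl, Subsingleton.elim _ _⟩⟩⟩
    rw [← SSet.rlp_monomorphisms] at h1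
    have hlp := h1 (SSet.horn.{0} n i).ι (MorphismProperty.monomorphisms.infer_property _)
    have sq : CommSq σ₀ (SSet.horn.{0} n i).ι
      (Limits.terminal.from S) (Limits.terminal.from _) := ⟨Subsingleton.elim _ _⟩
    exact ⟨sq.lift, sq.fac_left.symm⟩

end SSetPaper

open SSetPaper in
theorem funRestrict_trivialKanFibration_and_compositionSpaces_contractible
    (C : SSet.{0}) [SSet.Quasicategory C] :
    IsTrivialKanFibration (funRestrict C) ∧
      ∀ (f g : C _⦋1⦌) (u : (Λ[2, 1] : SSet) ⟶ C),
        u.app (op ⦋1⦌) e01 = f → u.app (op ⦋1⦌) e12 = g →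
        IsContractible (CompositionSpace C u) ∧ KanComplex (CompositionSpace C u) := by
  refine ⟨restrict_trivial C, fun _ _ u _ _ => ?_⟩
  exact ⟨fiber_contractible C u, kan_of_contractible _ (fiber_contractible C u)⟩
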